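/- If x is an aperiodic sequence over a finite alphabet, then its pattern complexity satisfies p*(n) ≥ 2n for all n ≥ 1. -/

import Mathlib

/-- Number of distinct patterns of `x` along a window `τ`. -/
noncomputable def patternCount {A : Type*} {n : ℕ} (x : ℤ → A) (τ : Fin n → ℤ) : ℕ :=
  Set.ncard {w : Fin n → A | ∃ m : ℤ, ∀ i : Fin n, w i = x (m + τ i)}

/-- Eventually periodic for a two-sided sequence. -/
def EventuallyPeriodicZ {A : Type*} (x : ℤ → A) : Prop :=
  ∃ T : ℤ, 1 ≤ T ∧ ∃ N : ℤ, ∀ m : ℤ, N ≤ m → x (m + T) = x m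

/-- The pattern of `x` seen at position `m` through `τ`. -/
def patt {A : Type*} {n : ℕ} (x : ℤ → A) (τ : Fin n → ℤ) (m : ℤ) : Fin n → A :=
  fun i => x (m + τ i)

lemma patternCount_eq {A : Type*} {n : ℕ} (x : ℤ → A) (τ : Fin n → ℤ) :
    patternCount x τ = (Set.range (patt x τ)).ncard := by
  unfold patternCount
  congr 1
  ext w
  constructor
  · rintro ⟨m, hm⟩
    exact ⟨m, funext fun i => (hm i).symm⟩
  · rintro ⟨m, rfl⟩
    exact ⟨m, fun i => rfl⟩

lemma ultra_fin {I B : Type*} [Finite B] (U : Ultrafilter I) (f : I → B) :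
    ∃ b, ∀ᶠ m in (U : Filter I), f m = b := by
  obtain ⟨b, hb⟩ := Ultrafilter.eq_pure_of_finite (U.map f)
  refine ⟨b, ?_⟩
  have : ({b} : Set B) ∈ U.map f := by rw [hb]; exact Set.mem_singleton b
  exact this

lemma exists_recurrent {A : Type*} [Finite A] (x : ℤ → A) :
    ∃ y : ℤ → A, (∀ (s : Finset ℤ) (T : ℤ), ∃ m, T < m ∧ ∀ i ∈ s, y (i + m) = y i) ∧
      (∀ (s : Finset ℤ) (T : ℤ), ∃ m, T < m ∧ ∀ i ∈ s, x (i + m) = y i) := by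
  classical
  letI := @Ultrafilter.addSemigroup ℕ+ _
  obtain ⟨U, hU⟩ : ∃ U : Ultrafilter ℕ+, U + U = U :=
    exists_idempotent_of_compact_t2_of_continuous_add_left Ultrafilter.continuous_add_left
  have idem : ∀ p : ℕ+ → Prop, (∀ᶠ m : ℕ+ in (U : Filter ℕ+), p m) →
      ∀ᶠ m : ℕ+ in (U : Filter ℕ+), ∀ᶠ m' : ℕ+ in (U : Filter ℕ+), p (m + m') := by
    intro p hp
    rw [← hU] at hp
    exact (Ultrafilter.eventually_add U U p).1 hp
  have large : ∀ T : ℤ, ∀ᶠ m : ℕ+ in (U : Filter ℕ+), T < ((m : ℕ) : ℤ) := by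
    intro T
    obtain ⟨b, hb⟩ := ultra_fin U (fun m : ℕ+ => (⟨min (m : ℕ) (T.toNat + 1), by omega⟩ : Fin (T.toNat + 2)))
    have h2 := idem _ hb
    obtain ⟨m, hm, hm'⟩ := (hb.and h2).exists
    obtain ⟨m', hm1, hm2⟩ := (hb.and hm').exists
    filter_upwards [hb] with k hk
    have e1 := congrArg Fin.val hm
    have e2 := congrArg Fin.val hm1
    have e3 := congrArg Fin.val hm2
    have e4 := congrArg Fin.val hk
    simp only [PNat.add_coe] at e1 e2 e3 e4
    have := m.pos
    have := m'.pos
    omega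
  choose y hy using fun i : ℤ => ultra_fin U (fun m : ℕ+ => x (i + ((m : ℕ) : ℤ)))
  refine ⟨y, ?_, ?_⟩
  · intro s T
    have h : ∀ i ∈ s, ∀ᶠ m : ℕ+ in (U : Filter ℕ+), y (i + ((m : ℕ) : ℤ)) = y i := by
      intro i _
      filter_upwards [idem _ (hy i)] with m hm
      obtain ⟨m', h1, h2⟩ := (hm.and (hy (i + ((m : ℕ) : ℤ)))).exists
      rw [← h1, ← h2]
      congr 1
      push_cast
      ring
    obtain ⟨m, h1, h2⟩ := (((Filter.eventually_all_finset s).2 h).and (large T)).exists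
    exact ⟨_, h2, h1⟩
  · intro s T
    obtain ⟨m, h1, h2⟩ :=
      (((Filter.eventually_all_finset s).2 (fun i _ => hy i)).and (large T)).exists
    exact ⟨_, h2, h1⟩

lemma patt_snoc_eq {A : Type*} {n : ℕ} (x : ℤ → A) (τ : Fin n → ℤ) (t m : ℤ) :
    patt x (Fin.snoc τ t : Fin (n + 1) → ℤ) m = Fin.snoc (patt x τ m) (x (m + t)) := by
  funext i
  refine Fin.lastCases ?_ (fun j => ?_) i
  · simp [patt]
  · simp [patt]

/-- Two distinct split patterns give two more patterns. -/
lemma gain_two {A : Type*} [Finite A] {n : ℕ} (x : ℤ → A) (τ : Fin n → ℤ) (t a a' b b' : ℤ)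
    (ha : patt x τ a = patt x τ a') (hb : patt x τ b = patt x τ b')
    (ha' : x (a + t) ≠ x (a' + t)) (hb' : x (b + t) ≠ x (b' + t))
    (hab : patt x τ a ≠ patt x τ b) :
    patternCount x τ + 2 ≤ patternCount x (Fin.snoc τ t : Fin (n + 1) → ℤ) := by
  classical
  rw [patternCount_eq, patternCount_eq]
  set P := Set.range (patt x τ)
  set Q := Set.range (patt x (Fin.snoc τ t : Fin (n + 1) → ℤ)) with hQ
  have hs : ∀ v : Fin n → A, ∃ c : A, v ∈ P → (Fin.snoc v c : Fin (n + 1) → A) ∈ Q := by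
    intro v
    by_cases hv : v ∈ P
    · obtain ⟨m, rfl⟩ := hv
      exact ⟨x (m + t), fun _ => ⟨m, patt_snoc_eq x τ t m⟩⟩
    · exact ⟨x 0, fun h => absurd h hv⟩
  choose s hs using hs
  have key : ∀ a a' : ℤ, patt x τ a = patt x τ a' → x (a + t) ≠ x (a' + t) →
      ∃ c, c ≠ s (patt x τ a) ∧ (Fin.snoc (patt x τ a) c : Fin (n + 1) → A) ∈ Q := by
    intro a a' h h'
    by_cases h1 : x (a + t) = s (patt x τ a)
    · refine ⟨x (a' + t), fun h2 => h' (h1.trans h2.symm), a', ?_⟩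
      rw [patt_snoc_eq, h]
    · exact ⟨_, h1, a, patt_snoc_eq x τ t a⟩
  obtain ⟨c, hc, hcQ⟩ := key a a' ha ha'
  obtain ⟨d, hd, hdQ⟩ := key b b' hb hb'
  set f : (Fin n → A) → (Fin (n + 1) → A) := fun v => Fin.snoc v (s v) with hf
  have hinj : Function.Injective f := by
    intro v w h
    exact (Fin.snoc_inj.1 h).1
  have n1 : (Fin.snoc (patt x τ a) c : Fin (n + 1) → A) ∉ f '' P := by
    rintro ⟨v, _, h⟩
    obtain ⟨h1, h2⟩ := Fin.snoc_inj.1 h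
    subst h1
    exact hc h2.symm
  have n2 : (Fin.snoc (patt x τ b) d : Fin (n + 1) → A) ∉
      insert (Fin.snoc (patt x τ a) c : Fin (n + 1) → A) (f '' P) := by
    rintro (h | ⟨v, _, h⟩)
    · exact hab (Fin.snoc_inj.1 h).1.symm
    · obtain ⟨h1, h2⟩ := Fin.snoc_inj.1 h
      subst h1
      exact hd h2.symm
  have hsub : insert (Fin.snoc (patt x τ b) d : Fin (n + 1) → A)
      (insert (Fin.snoc (patt x τ a) c : Fin (n + 1) → A) (f '' P)) ⊆ Q := by
    rintro w (rfl | rfl | ⟨v, hv, rfl⟩)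
    · exact hdQ
    · exact hcQ
    · exact hs v hv
  have hle := Set.ncard_le_ncard hsub (Set.toFinite _)
  rw [Set.ncard_insert_of_notMem n2 (Set.toFinite _),
    Set.ncard_insert_of_notMem n1 (Set.toFinite _), Set.ncard_image_of_injective _ hinj] at hle
  exact hle

/-- If the shift by `t` can change a letter only when that letter is `α`, then `x` is
eventually periodic. -/
lemma ep_of_single {A : Type*} (x : ℤ → A) (t M : ℤ) (ht : 1 ≤ t) (α : A)
    (h : ∀ m, M ≤ m → x m ≠ α → x (m + t) = x m) : EventuallyPeriodicZ x := by
  classical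
  -- along each residue class there is a point after which `x` does not change
  have stay : ∀ m, M ≤ m → x m ≠ α → ∀ k : ℕ, x (m + k * t) = x m := by
    intro m hm hne k
    induction k with
    | zero => simp
    | succ k ih =>
      have h1 : M ≤ m + k * t := by nlinarith [Int.natCast_nonneg k]
      have h2 := h _ h1 (by rw [ih]; exact hne)
      rw [ih] at h2
      rw [← h2]
      congr 1
      push_cast
      ring
  have cls : ∀ j : ℤ, ∃ K : ℕ, ∀ k : ℕ, K ≤ k →
      x (M + j % t + (k + 1 : ℕ) * t) = x (M + j % t + k * t) := by
    intro j
    have hj : 0 ≤ j % t := Int.emod_nonneg _ (by omega)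
    by_cases hex : ∃ K : ℕ, x (M + j % t + K * t) ≠ α
    · obtain ⟨K, hK⟩ := hex
      refine ⟨K, fun k hk => ?_⟩
      have h1 : M ≤ M + j % t + K * t := by nlinarith [Int.natCast_nonneg K]
      obtain ⟨d, rfl⟩ := Nat.exists_eq_add_of_le hk
      have e1 := stay _ h1 hK d
      have e2 := stay _ h1 hK (d + 1)
      rw [← e1] at e2
      convert e2 using 2 <;> push_cast <;> ring
    · push Not at hex
      exact ⟨0, fun k _ => by rw [hex, hex]⟩
  choose K hK using cls
  obtain ⟨B, hB⟩ : ∃ B : ℕ, ∀ j ∈ Finset.Ico 0 t, K j ≤ B :=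
    ⟨(Finset.Ico 0 t).sup K, fun j hj => Finset.le_sup hj⟩
  refine ⟨t, ht, M + (B + 1) * t, fun m hm => ?_⟩
  have hj0 : 0 ≤ (m - M) % t := Int.emod_nonneg _ (by omega)
  have hj1 : (m - M) % t < t := Int.emod_lt_of_pos _ (by omega)
  have hdiv := Int.emod_add_mul_ediv (m - M) t
  have hq : (B : ℤ) ≤ (m - M) / t := by
    rw [Int.le_ediv_iff_mul_le (by omega)]
    nlinarith
  obtain ⟨q, hq'⟩ : ∃ q : ℕ, (q : ℤ) = (m - M) / t := ⟨((m - M) / t).toNat, by omega⟩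
  have := hK ((m - M) % t) q ((hB _ (Finset.mem_Ico.2 ⟨hj0, hj1⟩)).trans (by omega))
  rw [Int.emod_emod_of_dvd _ dvd_rfl] at this
  rw [← hq'] at hdiv
  convert this using 2 <;> push_cast <;> linarith

/-- No extension by `t` splits two distinct patterns. -/
def NoGain {A : Type*} {n : ℕ} (x : ℤ → A) (τ : Fin n → ℤ) (t : ℤ) : Prop :=
  ∀ a a' b b', patt x τ a = patt x τ a' → patt x τ b = patt x τ b' →
    x (a + t) ≠ x (a' + t) → x (b + t) ≠ x (b' + t) → patt x τ a = patt x τ b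

/-- The main contradiction. -/
lemma ep_of_noGain {A : Type*} {k : ℕ} (x : ℤ → A) (τ : Fin (k + 1) → ℤ)
    (h0 : τ 0 = 0) (t M : ℤ) (ht : 1 ≤ t) (hng : NoGain x τ t)
    (hrec : ∀ m, M ≤ m → ∃ i, patt x τ i = patt x τ m ∧ x (i + t) = x i) :
    EventuallyPeriodicZ x := by
  by_cases hex : ∃ b b', patt x τ b = patt x τ b' ∧ x (b + t) ≠ x (b' + t)
  · obtain ⟨b, b', hb, hb'⟩ := hex
    refine ep_of_single x t M ht (x b) (fun m hm hne => ?_)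
    obtain ⟨i, hi, hit⟩ := hrec m hm
    have z1 : x i = x m := by simpa [patt, h0] using congrFun hi 0
    by_contra hcon
    have := hng m i b b' hi.symm hb (by rw [hit, z1]; exact hcon) hb'
    have z2 : x m = x b := by simpa [patt, h0] using congrFun this 0
    exact hne z2
  · push Not at hex
    refine ⟨t, ht, M, fun m hm => ?_⟩
    obtain ⟨i, hi, hit⟩ := hrec m hm
    have z1 : x i = x m := by simpa [patt, h0] using congrFun hi 0
    rw [← hex i m hi, hit, z1]

lemma extend_recurrent {A : Type*} [Finite A] {k : ℕ} (x : ℤ → A)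
    (hx : ¬ EventuallyPeriodicZ x)
    (hrec : ∀ (s : Finset ℤ) (T : ℤ), ∃ m, T < m ∧ ∀ i ∈ s, x (i + m) = x i)
    (τ : Fin (k + 1) → ℤ) (h0 : τ 0 = 0) (hL : 0 ≤ τ (Fin.last k)) :
    ∃ t, τ (Fin.last k) < t ∧ ¬ NoGain x τ t := by
  classical
  have hfin : (Set.range (patt x τ)).Finite := Set.toFinite _
  obtain ⟨s, hs⟩ : ∃ s : Finset ℤ, ∀ m, ∃ i ∈ s, patt x τ i = patt x τ m := by
    choose g hg using fun v : Set.range (patt x τ) => v.2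
    haveI := hfin.to_subtype
    haveI := Fintype.ofFinite (Set.range (patt x τ))
    exact ⟨Finset.univ.image g, fun m => ⟨g ⟨_, m, rfl⟩, by simp, hg ⟨_, m, rfl⟩⟩⟩
  obtain ⟨t, ht, hts⟩ := hrec s (τ (Fin.last k))
  refine ⟨t, ht, fun hng => hx (ep_of_noGain x τ h0 t 0 (by omega) hng fun m _ => ?_)⟩
  obtain ⟨i, his, hi⟩ := hs m
  exact ⟨i, hi, hts i his⟩

lemma extend_periodic {A : Type*} [Finite A] {k : ℕ} (x y : ℤ → A)
    (hx : ¬ EventuallyPeriodicZ x) (r : ℤ) (hr : 1 ≤ r) (hy : ∀ i, y (i + r) = y i)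
    (hxy : ∀ (s : Finset ℤ) (T : ℤ), ∃ m, T < m ∧ ∀ i ∈ s, x (i + m) = y i)
    (τ : Fin (k + 1) → ℤ) (h0 : τ 0 = 0) (hmono : StrictMono τ) :
    ∃ t, τ (Fin.last k) < t ∧ ¬ NoGain x τ t := by
  classical
  by_contra hcon
  push Not at hcon
  set L := τ (Fin.last k) with hLdef
  have hle : ∀ i, τ i ≤ L := fun i => hmono.monotone (Fin.le_last i)
  have hge : ∀ i, 0 ≤ τ i := fun i => h0 ▸ hmono.monotone (Fin.zero_le i)
  have hL : 0 ≤ L := hge _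
  -- every extension splits a pattern of `y`
  have claimA : ∀ t, L < t → ∃ a a' i, patt x τ a = patt x τ a' ∧ x (a + t) ≠ x (a' + t) ∧
      patt x τ a = patt y τ i := by
    intro t ht
    obtain ⟨m, -, hm⟩ := hxy (Finset.Icc (-(t + r)) 0) 0
    have hbreak : ∃ q : ℕ, x (q + m) ≠ y q := by
      by_contra hno
      push Not at hno
      apply hx
      refine ⟨r, hr, m, fun j hj => ?_⟩
      obtain ⟨q, hq⟩ : ∃ q : ℕ, (q : ℤ) = j - m := ⟨(j - m).toNat, by omega⟩
      obtain ⟨q', hq'⟩ : ∃ q' : ℕ, (q' : ℤ) = j - m + r := ⟨(j - m + r).toNat, by omega⟩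
      have e1 := hno q
      have e2 := hno q'
      have e3 := hy q
      rw [show (q : ℤ) + m = j by omega] at e1
      rw [show (q' : ℤ) + m = j + r by omega, show (q' : ℤ) = q + r by omega] at e2
      rw [e1, e2, e3]
    have hq := Nat.find_spec hbreak
    have hmin := fun j : ℕ => @Nat.find_min _ _ hbreak j
    set q := Nat.find hbreak
    have hagree : ∀ j : ℤ, -(t + r) ≤ j → j < q → x (j + m) = y j := by
      intro j hj1 hj2
      by_cases hj : j ≤ 0
      · exact hm j (Finset.mem_Icc.2 ⟨hj1, hj⟩)
      · have := hmin j.toNat (by omega)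
        push Not at this
        rwa [Int.toNat_of_nonneg (by omega)] at this
    have e1 : patt x τ (q + m - t) = patt y τ (q - t) := by
      funext i
      have := hagree (q - t + τ i) (by have := hge i; omega) (by have := hle i; omega)
      simp only [patt]
      rw [← this]
      congr 1
      ring
    have e2 : patt x τ (q + m - t - r) = patt y τ (q - t) := by
      funext i
      have := hagree (q - t - r + τ i) (by have := hge i; omega) (by have := hle i; omega)
      simp only [patt]
      rw [show (q : ℤ) - t + τ i = q - t - r + τ i + r by ring, hy, ← this]
      congr 1
      ring
    refine ⟨q + m - t, q + m - t - r, q - t, e1.trans e2.symm, ?_, e1⟩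
    have e3 := hagree (q - r) (by omega) (by omega)
    have e4 := hy (q - r)
    rw [show (q : ℤ) + m - t + t = q + m by ring,
      show (q : ℤ) + m - t - r + t = q - r + m by ring, e3, ← e4]
    simpa using hq
  -- positions whose pattern is not a pattern of `y`
  have hinj : Set.InjOn (patt x τ) {m | patt x τ m ∉ Set.range (patt y τ)} := by
    have aux : ∀ m m', patt x τ m ∉ Set.range (patt y τ) → patt x τ m = patt x τ m' →
        ¬ m < m' := by
      intro m m' hm heq hlt
      apply hx
      refine ⟨m' - m, by omega, m + L + 1, fun j hj => ?_⟩
      by_contra hne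
      obtain ⟨a, a', i, h1, h2, h3⟩ := claimA (j - m) (by omega)
      have := hcon (j - m) (by omega) m m' a a' heq h1
        (by
          rw [show m + (j - m) = j by ring, show m' + (j - m) = j + (m' - m) by ring]
          exact fun h => hne h.symm) h2
      exact hm ⟨i, (this.trans h3).symm⟩
    intro m hm m' hm' heq
    rcases lt_trichotomy m m' with h | h | h
    · exact absurd h (aux m m' hm heq)
    · exact h
    · exact absurd h (aux m' m hm' heq.symm)
  have hfin : {m | patt x τ m ∉ Set.range (patt y τ)}.Finite :=
    Set.Finite.of_finite_image (Set.toFinite _) hinj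
  obtain ⟨M, hM⟩ := hfin.bddAbove
  have hper : ∀ (c : ℕ) (i : ℤ), y (i + r * c) = y i := by
    intro c
    induction c with
    | zero => simp
    | succ c ih =>
      intro i
      rw [← ih i, ← hy (i + r * c)]
      congr 1
      push_cast
      ring
  obtain ⟨c, hc⟩ : ∃ c : ℕ, (c : ℤ) = L + 1 := ⟨(L + 1).toNat, by omega⟩
  have htL : L < r * c := by rw [hc]; nlinarith
  refine hx (ep_of_noGain x τ h0 (r * c) (M + 1) (by omega) (hcon _ htL) fun m hm => ?_)
  have hmem : patt x τ m ∈ Set.range (patt y τ) := by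
    by_contra h
    have := hM h
    omega
  obtain ⟨i, hi⟩ := hmem
  obtain ⟨b, -, hb⟩ := hxy (insert (i + r * c) (Finset.univ.image fun j => i + τ j)) 0
  have hbτ : ∀ j, x (i + τ j + b) = y (i + τ j) := fun j =>
    hb _ (Finset.mem_insert_of_mem (Finset.mem_image_of_mem _ (Finset.mem_univ j)))
  refine ⟨i + b, ?_, ?_⟩
  · rw [← hi]
    funext j
    simp only [patt]
    rw [← hbτ j]
    congr 1
    ring
  · have e1 := hb _ (Finset.mem_insert_self _ _)
    have e2 := hbτ 0
    rw [h0, add_zero] at e2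
    rw [e2, ← hper c i, ← e1]
    congr 1
    ring

lemma windows_of_extend {A : Type*} [Finite A] (x : ℤ → A)
    (hx : ¬ EventuallyPeriodicZ x)
    (hext : ∀ (k : ℕ) (τ : Fin (k + 1) → ℤ), τ 0 = 0 → StrictMono τ →
      ∃ t, τ (Fin.last k) < t ∧ ¬ NoGain x τ t) (k : ℕ) :
    ∃ τ : Fin (k + 1) → ℤ, StrictMono τ ∧ τ 0 = 0 ∧ 2 * (k + 1) ≤ patternCount x τ := by
  induction k with
  | zero =>
    refine ⟨fun _ => 0, fun i j h => absurd h (by have := i.2; have := j.2; rw [Fin.lt_def]; omega), rfl, ?_⟩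
    rw [patternCount_eq]
    have : ∃ m, x m ≠ x 0 := by
      by_contra h
      push Not at h
      exact hx ⟨1, le_rfl, 0, fun m _ => by rw [h, h m]⟩
    obtain ⟨m, hm⟩ := this
    have : 1 < (Set.range (patt x (fun _ : Fin (0 + 1) => (0 : ℤ)))).ncard := by
      rw [Set.one_lt_ncard (Set.toFinite _)]
      refine ⟨_, ⟨m, rfl⟩, _, ⟨0, rfl⟩, fun h => hm ?_⟩
      simpa [patt] using congrFun h 0
    omega
  | succ k ih =>
    obtain ⟨τ, hmono, h0, hcount⟩ := ih
    obtain ⟨t, ht, hng⟩ := hext k τ h0 hmono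
    unfold NoGain at hng
    push Not at hng
    obtain ⟨a, a', b, b', h1, h2, h3, h4, h5⟩ := hng
    refine ⟨(Fin.snoc τ t : Fin (k + 1 + 1) → ℤ), ?_, ?_, ?_⟩
    · rw [Fin.strictMono_iff_lt_succ]
      intro i
      refine Fin.lastCases ?_ (fun j => ?_) i
      · rw [Fin.succ_last, Fin.snoc_last, Fin.snoc_castSucc]
        exact ht
      · rw [Fin.succ_castSucc, Fin.snoc_castSucc, Fin.snoc_castSucc]
        exact hmono (Fin.castSucc_lt_succ)
    · rw [← Fin.castSucc_zero, Fin.snoc_castSucc, h0]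
    · have := gain_two x τ t a a' b b' h1 h2 h3 h4 h5
      omega

/-- For an aperiodic sequence, the pattern complexity is at least `2n`:
for every `n ≥ 1` there is a window `0 = τ 0 < τ 1 < ⋯ < τ (n-1)` realizing
at least `2n` distinct patterns. -/
theorem aperiodic_pattern_complexity {A : Type*} [Fintype A]
    (x : ℤ → A) (hx : ¬ EventuallyPeriodicZ x) :
    ∀ n : ℕ, (hn : 1 ≤ n) →
      ∃ τ : Fin n → ℤ, StrictMono τ ∧ τ ⟨0, hn⟩ = 0 ∧ 2 * n ≤ patternCount x τ := by
  classical
  intro n hn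
  obtain ⟨k, rfl⟩ : ∃ k, n = k + 1 := ⟨n - 1, by omega⟩
  obtain ⟨y, hyrec, hxy⟩ := exists_recurrent x
  by_cases hyp : EventuallyPeriodicZ y
  · obtain ⟨r, hr, N, hN⟩ := hyp
    have hy : ∀ i, y (i + r) = y i := by
      intro i
      obtain ⟨m, hm, h⟩ := hyrec {i, i + r} (N - i)
      have e1 := h i (by simp)
      have e2 := h (i + r) (by simp)
      rw [← e1, ← e2, ← hN (i + m) (by omega)]
      congr 1
      ring
    exact windows_of_extend x hx
      (fun k τ h0 hmono => extend_periodic x y hx r hr hy hxy τ h0 hmono) k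
  · obtain ⟨τ, h1, h2, h3⟩ := windows_of_extend y hyp
      (fun k τ h0 hmono => extend_recurrent y hyp hyrec τ h0
        (h0 ▸ hmono.monotone (Fin.zero_le (Fin.last k)))) k
    refine ⟨τ, h1, h2, h3.trans ?_⟩
    rw [patternCount_eq, patternCount_eq]
    refine Set.ncard_le_ncard ?_ (Set.toFinite _)
    rintro _ ⟨i, rfl⟩
    obtain ⟨b, -, hb⟩ := hxy (Finset.univ.image fun j => i + τ j) 0
    refine ⟨i + b, funext fun j => ?_⟩
    simp only [patt]
    rw [← hb (i + τ j) (Finset.mem_image_of_mem _ (Finset.mem_univ j))]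
    congr 1
    ring
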